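/- For all n ≥ 3, let a_k denote the number of Dyck paths of semilength n having area n + 2k, and let K = n(n−1)/2. Then a_K = 1, a_{K−1} = 1, and a_{K−2} = 2; consequently a_{K−1}^2 < a_{K−2} · a_K, so the sequence (a_0, a_1, …, a_K) is not log-concave. -/

import Mathlib

/-!
For a `±1` word with `p` up steps and `q` down steps, every inversion (a down step that precedes
an up step) lowers the area by `2` from its maximum, attained by `U^p D^q`
(`two_mul_area_add_four_mul_inv`). For a Dyck path of semilength `n` this reads
`area = n² - 2 · inv`, and `n² = n + 2K`, so `a_{K-j}` counts the Dyck paths of semilength `n`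
with exactly `j` inversions (`dyckAreaCount_eq_ncard`).

Words with few inversions are classified by induction on the word: an up step in front changes
nothing, and a down step in front creates as many inversions as there are up steps behind it.
The words with `0`, `1`, `2` inversions are `U^a D^b`, `U^a DU D^b`, and
`U^a DUU D^b` or `U^a DDU D^b` respectively. With `n` steps of each kind, this gives one, one and
two words, and they are Dyck paths because `n ≥ 3`.
-/

/-- A Dyck path is a list of steps in `{+1, -1}` whose partial sums (heights)
are all nonnegative and whose total sum is `0`. -/
def IsDyck (s : List ℤ) : Prop :=
  (∀ x ∈ s, x = 1 ∨ x = -1) ∧ (∀ i : ℕ, 0 ≤ (s.take i).sum) ∧ s.sum = 0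

/-- The area of a path: the sum of all heights `h_0, …, h_{length}`. -/
def area (s : List ℤ) : ℤ :=
  ∑ i ∈ Finset.range (s.length + 1), (s.take i).sum

/-- The length of the last descent, i.e. of the final maximal run of `-1` steps. -/
def lastDescentLen (s : List ℤ) : ℕ :=
  (s.reverse.takeWhile (fun x => x == (-1 : ℤ))).length

/-- The son of a path `s` at height `j`: insert a peak `+1, -1` immediately
after position `length - j`. -/
def son (s : List ℤ) (j : ℕ) : List ℤ :=
  s.take (s.length - j) ++ [1, -1] ++ s.drop (s.length - j)

/-- `a n k`: the number of Dyck paths of semilength `n` having area `n + 2k`. -/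
noncomputable def dyckAreaCount (n k : ℕ) : ℕ :=
  Nat.card {P : List ℤ // IsDyck P ∧ P.length = 2 * n ∧ area P = (n : ℤ) + 2 * k}

/-- The number of inversions of a word: pairs consisting of a step `-1` and a later step `1`. -/
def inv : List ℤ → ℕ
  | [] => 0
  | x :: t => inv t + if x = -1 then t.count 1 else 0

lemma area_cons (x : ℤ) (t : List ℤ) :
    area (x :: t) = x * (t.length + 1) + area t := by
  unfold area
  rw [List.length_cons, Finset.sum_range_succ']
  simp [Finset.sum_add_distrib]
  ring

lemma two_mul_area_add_four_mul_inv (s : List ℤ) (hs : ∀ x ∈ s, x = 1 ∨ x = -1) :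
    2 * area s + 4 * inv s = (s.count 1 : ℤ) * (s.count 1 + 1) + 2 * s.count 1 * s.count (-1)
      - s.count (-1) * (s.count (-1) + 1) ∧ s.length = s.count 1 + s.count (-1) ∧
      s.sum = (s.count 1 : ℤ) - s.count (-1) := by
  induction s with
  | nil => simp [area, inv]
  | cons x t ih =>
    obtain ⟨h1, h2, h3⟩ := ih fun y hy => hs y (List.mem_cons_of_mem _ hy)
    have h2' : (t.length : ℤ) = t.count 1 + t.count (-1) := by exact_mod_cast h2
    rw [area_cons]
    rcases hs x (by simp) with rfl | rfl
    · simp [inv, h2', h3]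
      refine ⟨by linarith, by omega, by ring⟩
    · simp [inv, h2', h3]
      refine ⟨by linarith, by omega, by ring⟩

/-! ### Words with at most two inversions -/

lemma eq_replicate_of_count_one_eq_zero (s : List ℤ) (hs : ∀ x ∈ s, x = 1 ∨ x = -1)
    (h : s.count 1 = 0) : s = List.replicate s.length (-1) := by
  refine List.eq_replicate_of_mem fun x hx => (hs x hx).resolve_left ?_
  rintro rfl
  exact List.count_eq_zero.1 h hx

lemma eq_of_inv_eq_zero (s : List ℤ) (hs : ∀ x ∈ s, x = 1 ∨ x = -1) (h : inv s = 0) :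
    ∃ a b, s = List.replicate a 1 ++ List.replicate b (-1) := by
  induction s with
  | nil => exact ⟨0, 0, rfl⟩
  | cons x t ih =>
    have ht : ∀ y ∈ t, y = 1 ∨ y = -1 := fun y hy => hs y (List.mem_cons_of_mem _ hy)
    rcases hs x (by simp) with rfl | rfl
    · obtain ⟨a, b, rfl⟩ := ih ht (by simpa [inv] using h)
      exact ⟨a + 1, b, by simp [List.replicate_succ]⟩
    · have hc : t.count 1 = 0 := by simp [inv] at h; simp [h]
      rw [eq_replicate_of_count_one_eq_zero t ht hc]
      exact ⟨0, t.length + 1, by simp [List.replicate_succ]⟩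

lemma eq_of_inv_eq_one (s : List ℤ) (hs : ∀ x ∈ s, x = 1 ∨ x = -1) (h : inv s = 1) :
    ∃ a b, s = List.replicate a 1 ++ -1 :: 1 :: List.replicate b (-1) := by
  induction s with
  | nil => simp [inv] at h
  | cons x t ih =>
    have ht : ∀ y ∈ t, y = 1 ∨ y = -1 := fun y hy => hs y (List.mem_cons_of_mem _ hy)
    rcases hs x (by simp) with rfl | rfl
    · obtain ⟨a, b, rfl⟩ := ih ht (by simpa [inv] using h)
      exact ⟨a + 1, b, by simp [List.replicate_succ]⟩
    · have h' : inv t + t.count 1 = 1 := by simpa [inv] using h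
      rcases Nat.eq_zero_or_pos (inv t) with h0 | h0
      · obtain ⟨a, b, rfl⟩ := eq_of_inv_eq_zero t ht h0
        obtain rfl : a = 1 := by simpa [h0, List.count_replicate] using h'
        exact ⟨0, b, by simp⟩
      · -- here the tail has an inversion, hence an up step, so there would be at least two inversions
        obtain ⟨a, b, rfl⟩ := ih ht (by omega)
        simp [List.count_replicate] at h'
        omega

lemma eq_of_inv_eq_two (s : List ℤ) (hs : ∀ x ∈ s, x = 1 ∨ x = -1) (h : inv s = 2) :
    ∃ a b, s = List.replicate a 1 ++ -1 :: 1 :: 1 :: List.replicate b (-1) ∨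
      s = List.replicate a 1 ++ -1 :: -1 :: 1 :: List.replicate b (-1) := by
  induction s with
  | nil => simp [inv] at h
  | cons x t ih =>
    have ht : ∀ y ∈ t, y = 1 ∨ y = -1 := fun y hy => hs y (List.mem_cons_of_mem _ hy)
    rcases hs x (by simp) with rfl | rfl
    · obtain ⟨a, b, rfl | rfl⟩ := ih ht (by simpa [inv] using h)
      · exact ⟨a + 1, b, Or.inl (by simp [List.replicate_succ])⟩
      · exact ⟨a + 1, b, Or.inr (by simp [List.replicate_succ])⟩
    · have h' : inv t + t.count 1 = 2 := by simpa [inv] using h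
      have h3 : inv t = 0 ∨ inv t = 1 ∨ inv t = 2 := by omega
      rcases h3 with h0 | h0 | h0
      · obtain ⟨a, b, rfl⟩ := eq_of_inv_eq_zero t ht h0
        obtain rfl : a = 2 := by simpa [h0, List.count_replicate] using h'
        exact ⟨0, b, Or.inl (by simp [List.replicate_succ])⟩
      · obtain ⟨a, b, rfl⟩ := eq_of_inv_eq_one t ht h0
        have ha : a = 0 := by
          simp [List.count_replicate] at h'
          omega
        subst ha
        exact ⟨0, b, Or.inr (by simp)⟩
      · obtain ⟨a, b, rfl | rfl⟩ := ih ht h0 <;>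
        · simp [List.count_replicate] at h'
          omega

lemma inv_replicate_one_append (a : ℕ) (t : List ℤ) : inv (List.replicate a 1 ++ t) = inv t := by
  induction a with
  | zero => rfl
  | succ a ih => simpa [List.replicate_succ, inv] using ih

lemma inv_replicate_neg_one (b : ℕ) : inv (List.replicate b (-1)) = 0 := by
  induction b with
  | zero => rfl
  | succ b ih => simpa [List.replicate_succ, inv, List.count_replicate] using ih

/-! ### Nonnegativity of prefixes -/

/-- The path with steps `s` started at height `c` never goes below `0`. -/
def NonnegFrom (c : ℤ) (s : List ℤ) : Prop := ∀ i : ℕ, 0 ≤ c + (s.take i).sum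

lemma NonnegFrom.cons {c x : ℤ} {t : List ℤ} (hc : 0 ≤ c) (h : NonnegFrom (c + x) t) :
    NonnegFrom c (x :: t) := by
  intro i
  cases i with
  | zero => simpa using hc
  | succ i => simpa [add_assoc] using h i

lemma NonnegFrom.replicate_one_append {c : ℤ} (a : ℕ) {t : List ℤ} (hc : 0 ≤ c)
    (h : NonnegFrom (c + a) t) : NonnegFrom c (List.replicate a 1 ++ t) := by
  induction a generalizing c with
  | zero => simpa using h
  | succ a ih =>
    rw [List.replicate_succ, List.cons_append]
    refine .cons hc (ih (by omega) ?_)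
    convert h using 1
    push_cast
    ring

lemma nonnegFrom_replicate_neg_one {c : ℤ} (b : ℕ) (h : (b : ℤ) ≤ c) :
    NonnegFrom c (List.replicate b (-1)) := by
  induction b generalizing c with
  | zero => intro i; simpa using h
  | succ b ih =>
    push_cast at h
    exact .cons (by omega) (ih (by omega))

/-! ### Counting Dyck paths by inversions -/

/-- Dyck paths of semilength `n` with exactly `j` inversions. -/
def dyckInv (n j : ℕ) : Set (List ℤ) :=
  {s | (∀ x ∈ s, x = 1 ∨ x = -1) ∧ NonnegFrom 0 s ∧ s.count 1 = n ∧ s.count (-1) = n ∧ inv s = j}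

lemma dyckAreaCount_eq_ncard (n k j : ℕ) (h : n * n = n + 2 * (k + j)) :
    dyckAreaCount n k = (dyckInv n j).ncard := by
  have h' : (n : ℤ) * n = n + 2 * (k + j) := by exact_mod_cast h
  unfold dyckAreaCount
  rw [← Nat.card_coe_set_eq]
  refine Nat.card_congr (Equiv.subtypeEquivRight fun s => ?_)
  simp only [dyckInv, IsDyck, NonnegFrom, Set.mem_ofPred_eq, zero_add]
  constructor
  · rintro ⟨⟨h1, h2, h3⟩, h4, h5⟩
    obtain ⟨e1, e2, e3⟩ := two_mul_area_add_four_mul_inv s h1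
    have hp : s.count 1 = n := by omega
    have hq : s.count (-1) = n := by omega
    refine ⟨h1, h2, hp, hq, ?_⟩
    rw [hp, hq, h5] at e1
    zify
    linarith
  · rintro ⟨h1, h2, hp, hq, h5⟩
    obtain ⟨e1, e2, e3⟩ := two_mul_area_add_four_mul_inv s h1
    rw [hp, hq, h5] at e1
    exact ⟨⟨h1, h2, by omega⟩, by omega, by linarith⟩

lemma dyckInv_zero (n : ℕ) :
    dyckInv n 0 = {List.replicate n 1 ++ List.replicate n (-1)} := by
  ext s
  rw [Set.mem_singleton_iff]
  constructor
  · rintro ⟨h1, -, hp, hq, hi⟩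
    obtain ⟨a, b, rfl⟩ := eq_of_inv_eq_zero s h1 hi
    simp [List.count_replicate] at hp hq
    rw [hp, hq]
  · rintro rfl
    refine ⟨?_, ?_, ?_, ?_, ?_⟩
    · simp; grind
    · exact .replicate_one_append _ le_rfl (nonnegFrom_replicate_neg_one _ (by simp))
    · simp [List.count_replicate]
    · simp [List.count_replicate]
    · rw [inv_replicate_one_append, inv_replicate_neg_one]

lemma dyckInv_one (n : ℕ) : dyckInv (n + 2) 1 =
    {List.replicate (n + 1) 1 ++ -1 :: 1 :: List.replicate (n + 1) (-1)} := by
  ext s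
  rw [Set.mem_singleton_iff]
  constructor
  · rintro ⟨h1, -, hp, hq, hi⟩
    obtain ⟨a, b, rfl⟩ := eq_of_inv_eq_one s h1 hi
    simp [List.count_replicate] at hp hq
    rw [hp, hq]
  · rintro rfl
    refine ⟨?_, ?_, ?_, ?_, ?_⟩
    · simp
    · refine .replicate_one_append _ le_rfl (.cons ?_ (.cons ?_ (nonnegFrom_replicate_neg_one _ ?_)))
        <;> push_cast <;> omega
    · simp [List.count_replicate]
    · simp [List.count_replicate]
    · simp [inv_replicate_one_append, inv, inv_replicate_neg_one, List.count_replicate]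

lemma dyckInv_two (n : ℕ) : dyckInv (n + 3) 2 =
    {List.replicate (n + 1) 1 ++ -1 :: 1 :: 1 :: List.replicate (n + 2) (-1),
      List.replicate (n + 2) 1 ++ -1 :: -1 :: 1 :: List.replicate (n + 1) (-1)} := by
  ext s
  rw [Set.mem_insert_iff, Set.mem_singleton_iff]
  constructor
  · rintro ⟨h1, -, hp, hq, hi⟩
    obtain ⟨a, b, rfl | rfl⟩ := eq_of_inv_eq_two s h1 hi
    · simp [List.count_replicate] at hp hq
      obtain rfl : a = n + 1 := by omega
      obtain rfl : b = n + 2 := by omega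
      exact Or.inl rfl
    · simp [List.count_replicate] at hp hq
      obtain rfl : a = n + 2 := by omega
      obtain rfl : b = n + 1 := by omega
      exact Or.inr rfl
  · rintro (rfl | rfl) <;> refine ⟨?_, ?_, ?_, ?_, ?_⟩
    · simp
    · refine .replicate_one_append _ le_rfl
        (.cons ?_ (.cons ?_ (.cons ?_ (nonnegFrom_replicate_neg_one _ ?_)))) <;> push_cast <;> omega
    · simp [List.count_replicate]
    · simp [List.count_replicate]
    · simp [inv_replicate_one_append, inv, inv_replicate_neg_one, List.count_replicate]
    · simp
    · refine .replicate_one_append _ le_rfl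
        (.cons ?_ (.cons ?_ (.cons ?_ (nonnegFrom_replicate_neg_one _ ?_)))) <;> push_cast <;> omega
    · simp [List.count_replicate]
    · simp [List.count_replicate]
    · simp [inv_replicate_one_append, inv, inv_replicate_neg_one, List.count_replicate]

lemma ncard_dyckInv_two (n : ℕ) : (dyckInv (n + 3) 2).ncard = 2 := by
  rw [dyckInv_two]
  refine Set.ncard_pair fun h => ?_
  -- the two words differ at position `n + 1`, right after the shorter initial ascent
  rw [show List.replicate (n + 2) (1 : ℤ) = List.replicate (n + 1) 1 ++ [1] from
    List.replicate_succ', List.append_assoc] at h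
  simp at h

/-- For `n ≥ 3`, with `K = n(n−1)/2`, the last three nonzero
terms of the sequence `(a_k)` of Dyck paths of semilength `n` by area `n + 2k`
are `a_{K−2} = 2`, `a_{K−1} = 1`, `a_K = 1`; consequently
`a_{K−1}² < a_{K−2} · a_K` and the sequence `(a_0, …, a_K)` is not log-concave. -/
theorem dyck_area_sequence_not_log_concave (n : ℕ) (hn : 3 ≤ n) (K : ℕ)
    (hK : K = n * (n - 1) / 2) :
    dyckAreaCount n K = 1 ∧
    dyckAreaCount n (K - 1) = 1 ∧
    dyckAreaCount n (K - 2) = 2 ∧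
    (dyckAreaCount n (K - 1)) ^ 2 < dyckAreaCount n (K - 2) * dyckAreaCount n K ∧
    ¬ (∀ k : ℕ, 1 ≤ k → k ≤ K - 1 →
        dyckAreaCount n (k - 1) * dyckAreaCount n (k + 1) ≤ (dyckAreaCount n k) ^ 2) := by
  obtain ⟨m, rfl⟩ := Nat.exists_eq_add_of_le' hn
  have h2 : K * 2 = (m + 3) * (m + 2) := by
    rw [hK]
    exact Nat.div_mul_cancel (Nat.even_mul_pred_self (m + 3)).two_dvd
  have hK3 : 3 ≤ K := by nlinarith
  obtain ⟨k, rfl⟩ := Nat.exists_eq_add_of_le' hK3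
  have c0 : dyckAreaCount (m + 3) (k + 3) = 1 := by
    rw [dyckAreaCount_eq_ncard _ _ 0 (by nlinarith), dyckInv_zero, Set.ncard_singleton]
  have c1 : dyckAreaCount (m + 3) (k + 2) = 1 := by
    rw [dyckAreaCount_eq_ncard _ _ 1 (by nlinarith), dyckInv_one, Set.ncard_singleton]
  have c2 : dyckAreaCount (m + 3) (k + 1) = 2 := by
    rw [dyckAreaCount_eq_ncard _ _ 2 (by nlinarith), ncard_dyckInv_two]
  change _ ∧ dyckAreaCount (m + 3) (k + 2) = 1 ∧ dyckAreaCount (m + 3) (k + 1) = 2 ∧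
    dyckAreaCount (m + 3) (k + 2) ^ 2 < dyckAreaCount (m + 3) (k + 1) * _ ∧ _
  refine ⟨c0, c1, c2, by rw [c0, c1, c2]; norm_num, fun h => ?_⟩
  have h' := h (k + 2) (by omega) (by omega)
  rw [show k + 2 - 1 = k + 1 by omega, c0, c1, c2] at h'
  omega
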